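/- The prime number theorem implies that (1/N)∑_{n=1}^{N} λ(n) → 0 as N → ∞, where λ(n) = (−1)^{Ω(n)} is the Liouville function and Ω(n) counts prime factors of n with multiplicity. -/

import Mathlib

section Taub
open Filter MeasureTheory Complex Topology FourierTransform SchwartzMap Set

lemma taub_ident (a : ℝ → ℂ) (ha : Measurable a) (hb : ∀ u, ‖a u‖ ≤ 1) (G : ℂ → ℂ)
    (hG : ∀ s : ℂ, 0 < s.re → G s = ∫ u in Ioi (0:ℝ), a u * cexp (-s * u))
    (ψ : 𝓢(ℝ, ℂ)) (R x σ : ℝ) (hσ : 0 < σ) :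
    ∫ v : ℝ, ψ v * cexp (2 * Real.pi * v * R * x * I) * G (σ + 2 * Real.pi * R * v * I) =
      ∫ u in Ioi (0:ℝ), a u * Real.exp (-σ * u) * 𝓕 (ψ : ℝ → ℂ) (R * (u - x)) := by
  have h1 : ∀ v : ℝ, ψ v * cexp (2 * Real.pi * v * R * x * I) * G (σ + 2 * Real.pi * R * v * I) =
      ∫ u in Ioi (0:ℝ), ψ v * cexp (2 * Real.pi * v * R * x * I) *
        (a u * cexp (-(σ + 2 * Real.pi * R * v * I) * u)) := by
    intro v
    rw [hG _ (by simpa using hσ), integral_const_mul]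
  simp_rw [h1]
  rw [integral_integral_swap]
  · refine integral_congr_ae (ae_of_all _ fun u => ?_)
    simp only
    rw [Real.fourier_eq', ← integral_const_mul]
    refine integral_congr_ae (ae_of_all _ fun v => ?_)
    simp only [smul_eq_mul, ofReal_exp]
    have : cexp (2 * Real.pi * v * R * x * I) * cexp (-(σ + 2 * Real.pi * R * v * I) * u)
      = cexp (((-σ * u : ℝ) : ℂ)) * cexp ((((-2 * Real.pi * inner ℝ v (R * (u - x)) : ℝ) : ℂ) * I)) := by
      rw [← Complex.exp_add, ← Complex.exp_add]
      congr 1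
      simp only [RCLike.inner_apply, conj_trivial]
      push_cast
      ring
    linear_combination (ψ v * a u) * this
  · have h2 : Integrable (fun p : ℝ × ℝ => ‖ψ p.1‖ * Real.exp (-σ * p.2))
        (volume.prod (volume.restrict (Ioi (0:ℝ)))) :=
      Integrable.mul_prod ψ.integrable.norm (exp_neg_integrableOn_Ioi 0 hσ)
    refine h2.mono' ?_ (ae_of_all _ fun p => ?_)
    · refine Measurable.aestronglyMeasurable ?_
      have := ψ.continuous.measurable
      unfold Function.uncurry
      fun_prop
    · have e1 : ‖cexp (2 * Real.pi * p.1 * R * x * I)‖ = 1 := by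
        have := Complex.norm_exp_ofReal_mul_I (2 * Real.pi * p.1 * R * x)
        push_cast at this; exact this
      have e2 : ‖cexp (-(σ + 2 * Real.pi * R * p.1 * I) * p.2)‖ = Real.exp (-σ * p.2) := by
        rw [Complex.norm_exp]; simp
      simp only [Function.uncurry, norm_mul, e1, e2, mul_one]
      have := hb p.2
      have := mul_le_of_le_one_left (Real.exp_pos (-σ * p.2)).le this
      gcongr

lemma taub_limit (a : ℝ → ℂ) (ha : Measurable a) (hb : ∀ u, ‖a u‖ ≤ 1) (G : ℂ → ℂ)
    (hGc : ContinuousOn G {s | 0 ≤ s.re})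
    (hG : ∀ s : ℂ, 0 < s.re → G s = ∫ u in Ioi (0:ℝ), a u * cexp (-s * u))
    (ψ : 𝓢(ℝ, ℂ)) (hψ : HasCompactSupport ψ) (R x : ℝ) (hR : 0 < R) :
    ∫ v : ℝ, ψ v * cexp (2 * Real.pi * v * R * x * I) * G (2 * Real.pi * R * v * I) =
      ∫ u in Ioi (0:ℝ), a u * 𝓕 (ψ : ℝ → ℂ) (R * (u - x)) := by
  have hK : Continuous (𝓕 (ψ : ℝ → ℂ)) := by
    rw [← fourier_coe]; exact (𝓕 ψ).continuous
  have hKi : Integrable (fun u => 𝓕 (ψ : ℝ → ℂ) (R * (u - x))) := by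
    rw [← fourier_coe]
    exact ((𝓕 ψ).integrable.comp_mul_left' hR.ne').comp_sub_right x
  have e1 : ∀ v : ℝ, ‖cexp (2 * Real.pi * v * R * x * I)‖ = 1 := by
    intro v
    have := Complex.norm_exp_ofReal_mul_I (2 * Real.pi * v * R * x)
    push_cast at this; exact this
  have hmaps : ContinuousOn (fun p : ℝ × ℝ => G (p.1 + 2 * Real.pi * R * p.2 * I)) (Icc 0 1 ×ˢ univ) := by
    refine hGc.comp (by fun_prop) ?_
    rintro ⟨s, v⟩ ⟨⟨h, _⟩, _⟩
    simpa using h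
  obtain ⟨C, hC⟩ := (isCompact_Icc.prod hψ).exists_bound_of_continuousOn
    (hmaps.mono (Set.prod_mono_right (subset_univ (tsupport ψ))))
  have hl : Tendsto (fun σ : ℝ => ∫ v : ℝ, ψ v * cexp (2 * Real.pi * v * R * x * I) * G (σ + 2 * Real.pi * R * v * I))
      (𝓝[>] 0) (𝓝 (∫ v : ℝ, ψ v * cexp (2 * Real.pi * v * R * x * I) * G (2 * Real.pi * R * v * I))) := by
    have hev : ∀ᶠ σ : ℝ in 𝓝[>] 0, σ ∈ Icc (0:ℝ) 1 := by
      filter_upwards [Ioc_mem_nhdsGT (zero_lt_one' ℝ)] with σ hσ using ⟨hσ.1.le, hσ.2⟩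
    refine tendsto_integral_filter_of_dominated_convergence (fun v => ‖ψ v‖ * C) ?_ ?_
      (ψ.integrable.norm.mul_const C) ?_
    · filter_upwards [hev] with σ hσ
      refine Continuous.aestronglyMeasurable ?_
      have hgc : Continuous fun v : ℝ => G (σ + 2 * Real.pi * R * v * I) := by
        rw [← continuousOn_univ]
        exact hmaps.comp (f := fun v : ℝ => (σ, v)) (by fun_prop) (fun v _ => ⟨hσ, trivial⟩)
      exact (ψ.continuous.mul (by fun_prop)).mul hgc
    · filter_upwards [hev] with σ hσ
      refine ae_of_all _ fun v => ?_
      rw [norm_mul, norm_mul, e1, mul_one]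
      by_cases hv : v ∈ tsupport ψ
      · have := hC (σ, v) ⟨hσ, hv⟩
        gcongr
      · simp [image_eq_zero_of_notMem_tsupport hv]
    · refine ae_of_all _ fun v => Tendsto.const_mul _ ?_
      have h0 : ContinuousWithinAt G {s | 0 ≤ s.re} (2 * Real.pi * R * v * I) := hGc _ (by simp)
      refine h0.tendsto.comp (tendsto_nhdsWithin_iff.2 ⟨?_, ?_⟩)
      · have : Continuous fun σ : ℝ => (σ : ℂ) + 2 * Real.pi * R * v * I := by fun_prop
        have := this.tendsto 0
        simp only [ofReal_zero, zero_add] at this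
        exact this.mono_left nhdsWithin_le_nhds
      · filter_upwards [hev] with σ hσ
        simpa using hσ.1
  have hr : Tendsto (fun σ : ℝ => ∫ u in Ioi (0:ℝ), a u * Real.exp (-σ * u) * 𝓕 (ψ : ℝ → ℂ) (R * (u - x)))
      (𝓝[>] 0) (𝓝 (∫ u in Ioi (0:ℝ), a u * 𝓕 (ψ : ℝ → ℂ) (R * (u - x)))) := by
    refine tendsto_integral_filter_of_dominated_convergence
      (fun u => ‖𝓕 (ψ : ℝ → ℂ) (R * (u - x))‖) ?_ ?_ hKi.norm.integrableOn ?_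
    · refine Eventually.of_forall fun σ => Measurable.aestronglyMeasurable ?_
      have := hK.measurable
      fun_prop
    · filter_upwards [self_mem_nhdsWithin] with σ hσ
      filter_upwards [ae_restrict_mem measurableSet_Ioi] with u hu
      rw [norm_mul, norm_mul]
      have h1 : ‖(Real.exp (-σ * u) : ℂ)‖ ≤ 1 := by
        rw [Complex.norm_real, Real.norm_of_nonneg (Real.exp_pos _).le, Real.exp_le_one_iff]
        have := mul_pos (show (0:ℝ) < σ from hσ) (show (0:ℝ) < u from hu)
        linarith
      have := hb u
      have : ‖a u‖ * ‖(Real.exp (-σ * u) : ℂ)‖ ≤ 1 := mul_le_one₀ this (norm_nonneg _) h1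
      exact mul_le_of_le_one_left (norm_nonneg _) this
    · refine ae_of_all _ fun u => ?_
      have : Continuous fun σ : ℝ => a u * Real.exp (-σ * u) * 𝓕 (ψ : ℝ → ℂ) (R * (u - x)) := by fun_prop
      have := this.tendsto 0
      simp only [neg_zero, zero_mul, Real.exp_zero, ofReal_one, mul_one] at this
      exact this.mono_left nhdsWithin_le_nhds
  refine tendsto_nhds_unique hl (hr.congr' ?_)
  filter_upwards [self_mem_nhdsWithin] with σ hσ
  exact (taub_ident a ha hb G hG ψ R x σ hσ).symm

lemma exists_kernel : ∃ ψ : 𝓢(ℝ, ℂ), HasCompactSupport ψ ∧ ψ 0 = 1 := by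
  let f : ContDiffBump (0:ℝ) := ⟨1, 2, by norm_num, by norm_num⟩
  have hc : HasCompactSupport (fun x => (f x : ℂ)) := f.hasCompactSupport.comp_left (g := ofReal) (by simp)
  have hd : ContDiff ℝ (⊤ : ℕ∞) (fun x => (f x : ℂ)) := ofRealCLM.contDiff.comp f.contDiff
  refine ⟨hc.toSchwartzMap hd, hc, ?_⟩
  have : f 0 = 1 := f.one_of_mem_closedBall (by simp [f])
  simp [this]

theorem taub (a : ℝ → ℂ) (ha : Measurable a) (hb : ∀ u, ‖a u‖ ≤ 1) (ha0 : ∀ u < 0, a u = 0)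
    (G : ℂ → ℂ) (hGc : ContinuousOn G {s | 0 ≤ s.re})
    (hG : ∀ s : ℂ, 0 < s.re → G s = ∫ u in Ioi (0:ℝ), a u * cexp (-s * u))
    (hosc : ∀ x u, ‖a x - a u‖ ≤ 2 * |u - x| + Real.exp (-x)) :
    Tendsto a atTop (𝓝 0) := by
  obtain ⟨ψ, hψ, hψ0⟩ := exists_kernel
  set K : 𝓢(ℝ, ℂ) := 𝓕 ψ with hKdef
  have hKψ : ∀ w, 𝓕 (ψ : ℝ → ℂ) w = K w := fun w => by rw [hKdef, fourier_coe]
  have hK1 : ∫ w, K w = 1 := by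
    have h : (𝓕⁻ K) 0 = ψ 0 := by rw [hKdef, FourierTransform.fourierInv_fourier_eq]
    rw [fourierInv_coe, Real.fourierInv_eq'] at h
    simpa [hψ0] using h
  set C0 : ℝ := ∫ w, ‖K w‖
  set C1 : ℝ := ∫ w, |w| * ‖K w‖
  have hi0 : Integrable (fun w => ‖K w‖) := K.integrable.norm
  have hi1 : Integrable (fun w => |w| * ‖K w‖) := by
    simpa using K.integrable_pow_mul volume 1
  have hC1 : 0 ≤ C1 := integral_nonneg fun w => by positivity
  have main : ∀ R : ℝ, 0 < R → ∀ x : ℝ, ‖a x‖ ≤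
      R * ‖∫ v : ℝ, ψ v * cexp (2 * Real.pi * v * R * x * I) * G (2 * Real.pi * R * v * I)‖ +
        2 * C1 / R + Real.exp (-x) * C0 := by
    intro R hR x
    have hKi : Integrable (fun u => K (R * (u - x))) :=
      (K.integrable.comp_mul_left' hR.ne').comp_sub_right x
    have hsub : ∀ g : ℝ → ℝ, ∫ u, g (R * (u - x)) = R⁻¹ * ∫ w, g w := by
      intro g
      rw [integral_sub_right_eq_self (fun u => g (R * u)) x, Measure.integral_comp_mul_left]
      simp [abs_of_pos hR]
    have hsubc : ∫ u, K (R * (u - x)) = (R⁻¹ : ℂ) := by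
      rw [integral_sub_right_eq_self (fun u => K (R * u)) x, Measure.integral_comp_mul_left, hK1]
      simp [abs_of_pos hR]
    have hlim := taub_limit a ha hb G hGc hG ψ hψ R x hR
    simp_rw [hKψ] at hlim
    have hfull : ∫ u in Ioi (0:ℝ), a u * K (R * (u - x)) = ∫ u, a u * K (R * (u - x)) := by
      rw [← integral_Ici_eq_integral_Ioi]
      refine setIntegral_eq_integral_of_forall_compl_eq_zero fun u hu => ?_
      rw [ha0 u (by simpa using hu), zero_mul]
    rw [hfull] at hlim
    rw [hlim]
    have haK : Integrable (fun u => a u * K (R * (u - x))) :=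
      hKi.bdd_mul ha.aestronglyMeasurable (ae_of_all _ hb)
    have hdiff : a x * (R⁻¹ : ℂ) - ∫ u, a u * K (R * (u - x)) = ∫ u, (a x - a u) * K (R * (u - x)) := by
      rw [← hsubc, ← integral_const_mul, ← integral_sub (hKi.const_mul _) haK]
      simp_rw [sub_mul]
    have hj0 : Integrable (fun u => ‖K (R * (u - x))‖) := hKi.norm
    have hj1 : Integrable (fun u => |R * (u - x)| * ‖K (R * (u - x))‖) :=
      (hi1.comp_mul_left' hR.ne').comp_sub_right x
    have hbd : ‖∫ u, (a x - a u) * K (R * (u - x))‖ ≤ R⁻¹ * (2 * C1 / R + Real.exp (-x) * C0) := by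
      calc _ ≤ ∫ u, (2 / R) * (|R * (u - x)| * ‖K (R * (u - x))‖) + Real.exp (-x) * ‖K (R * (u - x))‖ := by
            refine norm_integral_le_of_norm_le ((hj1.const_mul _).add (hj0.const_mul _)) (ae_of_all _ fun u => ?_)
            rw [norm_mul, abs_mul, abs_of_pos hR]
            have := mul_le_mul_of_nonneg_right (hosc x u) (norm_nonneg (K (R * (u - x))))
            refine this.trans (le_of_eq ?_)
            field_simp
        _ = _ := by
            rw [integral_add (hj1.const_mul _) (hj0.const_mul _), integral_const_mul, integral_const_mul,
              hsub (fun w => |w| * ‖K w‖), hsub (fun w => ‖K w‖)]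
            ring
    have h3 : a x = R * (∫ u, a u * K (R * (u - x))) + R * ∫ u, (a x - a u) * K (R * (u - x)) := by
      rw [← hdiff]
      have : (R : ℂ) ≠ 0 := by exact_mod_cast hR.ne'
      field_simp
      ring
    calc ‖a x‖ = ‖R * (∫ u, a u * K (R * (u - x))) + R * ∫ u, (a x - a u) * K (R * (u - x))‖ := by rw [← h3]
      _ ≤ R * ‖∫ u, a u * K (R * (u - x))‖ + R * ‖∫ u, (a x - a u) * K (R * (u - x))‖ := by
          refine (norm_add_le _ _).trans (le_of_eq ?_)
          rw [norm_mul, norm_mul, Complex.norm_real, Real.norm_of_nonneg hR.le]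
      _ ≤ R * ‖∫ u, a u * K (R * (u - x))‖ + R * (R⁻¹ * (2 * C1 / R + Real.exp (-x) * C0)) := by gcongr
      _ = _ := by field_simp; ring
  have hRL : ∀ R : ℝ, 0 < R → Tendsto (fun x : ℝ => ∫ v : ℝ, ψ v * cexp (2 * Real.pi * v * R * x * I) * G (2 * Real.pi * R * v * I)) atTop (𝓝 0) := by
    intro R hR
    have h := Real.zero_at_infty_fourier (fun v : ℝ => ψ v * G (2 * Real.pi * R * v * I))
    have ht : Tendsto (fun x : ℝ => -(R * x)) atTop (cocompact ℝ) :=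
      (tendsto_neg_atTop_atBot.comp (tendsto_id.const_mul_atTop hR)).mono_right atBot_le_cocompact
    refine (h.comp ht).congr fun x => ?_
    simp only [Function.comp]
    rw [Real.fourier_eq']
    refine integral_congr_ae (ae_of_all _ fun v => ?_)
    simp only [smul_eq_mul, RCLike.inner_apply, conj_trivial]
    have : (((-2 * Real.pi * (-(R * x) * v) : ℝ) : ℂ) * I) = 2 * Real.pi * v * R * x * I := by push_cast; ring
    rw [this]
    ring
  rw [NormedAddGroup.tendsto_nhds_zero]
  intro ε hε
  have hR : 0 < (6 * C1 + 1) / ε := by positivity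
  have hR2 : 2 * C1 / ((6 * C1 + 1) / ε) < ε / 3 := by
    rw [div_div_eq_mul_div, div_lt_div_iff₀ (by positivity) (by positivity)]
    nlinarith
  have t1 := ((hRL _ hR).norm.const_mul ((6 * C1 + 1) / ε))
  rw [norm_zero, mul_zero] at t1
  have t2 : Tendsto (fun x : ℝ => Real.exp (-x) * C0) atTop (𝓝 0) := by
    simpa using (Real.tendsto_exp_neg_atTop_nhds_zero).mul_const C0
  have hε3 : 0 < ε / 3 := by positivity
  filter_upwards [t1.eventually_lt_const hε3, t2.eventually_lt_const hε3] with x h1 h2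
  have := main _ hR x
  linarith

end Taub

section Arith
open ArithmeticFunction Filter Complex MeasureTheory Topology

noncomputable def lio (n : ℕ) : ℂ := (liouville n : ℂ)

lemma lio_zero : lio 0 = 0 := by simp [lio]
lemma lio_norm_le (n : ℕ) : ‖lio n‖ ≤ 1 := by
  unfold lio
  by_cases h : n = 0
  · simp [h]
  · simp [liouville_apply h]

lemma lio_LSeriesSummable {s : ℂ} (hs : 1 < s.re) : LSeriesSummable lio s :=
  LSeriesSummable_of_bounded_of_one_lt_re (m := 1) (fun n _ => lio_norm_le n) hs

noncomputable def lioHom (s : ℂ) (_hs : s ≠ 0) : ℕ →*₀ ℂ where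
  toFun n := lio n * (n : ℂ) ^ (-s)
  map_zero' := by simp [lio_zero]
  map_one' := by simp [lio, liouville_apply_one]
  map_mul' m n := by
    simp only [lio, liouville_apply_mul, Nat.cast_mul]
    rw [natCast_mul_natCast_cpow]
    push_cast
    ring

lemma lioHom_eq_term {s : ℂ} (hs : s ≠ 0) (n : ℕ) : lioHom s hs n = LSeries.term lio s n := by
  rw [LSeries.term_def₀ lio_zero]
  rfl

lemma LSeries_lio_mul {s : ℂ} (hs : 1 < s.re) :
    LSeries lio s * riemannZeta s = riemannZeta (2 * s) := by
  have hs0 : s ≠ 0 := ne_zero_of_one_lt_re hs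
  have h1 : HasProd (fun p : Nat.Primes => (1 - lioHom s hs0 p)⁻¹) (LSeries lio s) := by
    have hsum : Summable (fun n => ‖lioHom s hs0 n‖) := by
      simp_rw [lioHom_eq_term]
      exact (lio_LSeriesSummable hs).norm
    have := EulerProduct.eulerProduct_completely_multiplicative_hasProd hsum
    simp_rw [lioHom_eq_term hs0] at this ⊢
    exact this
  have h2 := riemannZeta_eulerProduct_hasProd hs
  have h3 := riemannZeta_eulerProduct_hasProd (s := 2 * s) (by simp; linarith)
  refine (h1.mul h2).unique ?_
  convert! h3 using 2 with p
  rw [← mul_inv]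
  congr 1
  have e1 : lioHom s hs0 p = - (p : ℂ) ^ (-s) := by
    change lio p * (p : ℂ) ^ (-s) = _
    simp [lio, liouville_apply p.2.ne_zero, cardFactors_apply_prime p.2]
  have e2 : (p : ℂ) ^ (-(2 * s)) = (p : ℂ) ^ (-s) * (p : ℂ) ^ (-s) := by
    rw [← cpow_add _ _ (by exact_mod_cast p.2.ne_zero)]
    ring_nf
  rw [e1, e2]
  ring

lemma zeta1_ne_zero {s : ℂ} (hs : 1 ≤ s.re) : riemannZeta₁ s ≠ 0 := by
  by_cases h : s = 1
  · simp [h, riemannZeta₁_one]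
  · intro h0
    have := riemannZeta_ne_zero_of_one_le_re hs
    apply this
    grind [riemannZeta₁, riemannZeta₀]

noncomputable def GG (s : ℂ) : ℂ := riemannZeta (2 * (s + 1)) * s / riemannZeta₁ (s + 1) / (s + 1)

lemma GG_cont : ContinuousOn GG {s | 0 ≤ s.re} := by
  intro s hs
  have hs : 0 ≤ s.re := hs
  refine ContinuousAt.continuousWithinAt ?_
  unfold GG
  have h1 : s + 1 ≠ 0 := by
    intro h
    have := congrArg Complex.re h
    simp at this
    linarith
  have h2 : riemannZeta₁ (s + 1) ≠ 0 := zeta1_ne_zero (by simpa using hs)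
  have h3 : (2 * (s + 1)) ≠ 1 := by
    intro h
    have := congrArg Complex.re h
    simp at this
    linarith
  have c1 : ContinuousAt (fun s : ℂ => riemannZeta (2 * (s + 1))) s :=
    ContinuousAt.comp (g := riemannZeta) (differentiableAt_riemannZeta h3).continuousAt (by fun_prop)
  have c2 : ContinuousAt (fun s : ℂ => riemannZeta₁ (s + 1)) s :=
    ContinuousAt.comp (g := riemannZeta₁) differentiable_riemannZeta₁.continuous.continuousAt (by fun_prop)
  exact ((c1.mul continuousAt_id).div c2 h2).div (by fun_prop) h1

noncomputable def SS (N : ℕ) : ℂ := ∑ n ∈ Finset.Icc 1 N, lio n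

lemma SS_sub {M N : ℕ} (h : M ≤ N) : ‖SS N - SS M‖ ≤ (N : ℝ) - M := by
  unfold SS
  have hd := Finset.sum_sdiff (f := lio) (Finset.Icc_subset_Icc_right h : Finset.Icc 1 M ⊆ Finset.Icc 1 N)
  rw [← hd, add_sub_cancel_right]
  refine (norm_sum_le_of_le _ (fun n _ => lio_norm_le n)).trans ?_
  rw [Finset.sum_const, Finset.card_sdiff_of_subset (Finset.Icc_subset_Icc_right h)]
  simp [Nat.cast_sub h]

lemma SS_le (N : ℕ) : ‖SS N‖ ≤ N := by
  have := SS_sub (Nat.zero_le N)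
  simpa [SS] using this

noncomputable def aa (u : ℝ) : ℂ := SS ⌊Real.exp u⌋₊ * Real.exp (-u)

lemma aa_meas : Measurable aa := by
  unfold aa
  have h : Measurable SS := measurable_from_top
  have := h.comp (Nat.measurable_floor.comp Real.measurable_exp)
  simp only [Function.comp_def] at this
  fun_prop

lemma SS_exp_le (u : ℝ) : ‖SS ⌊Real.exp u⌋₊‖ ≤ Real.exp u :=
  (SS_le _).trans (Nat.floor_le (Real.exp_pos u).le)

lemma aa_le (u : ℝ) : ‖aa u‖ ≤ 1 := by
  unfold aa
  rw [norm_mul, Complex.norm_real, Real.norm_of_nonneg (Real.exp_pos _).le]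
  refine (mul_le_mul_of_nonneg_right (SS_exp_le u) (Real.exp_pos _).le).trans ?_
  rw [← Real.exp_add]; simp

lemma aa_neg (u : ℝ) (hu : u < 0) : aa u = 0 := by
  unfold aa
  rw [Nat.floor_eq_zero.2 (by simpa using hu)]
  simp [SS]

lemma aa_osc' {x u : ℝ} (h : x ≤ u) : ‖aa u - aa x‖ ≤ 2 * (u - x) + Real.exp (-u) := by
  have e : aa u - aa x = (SS ⌊Real.exp u⌋₊ - SS ⌊Real.exp x⌋₊) * (Real.exp (-u) : ℝ)
     - SS ⌊Real.exp x⌋₊ * ((Real.exp (-x) - Real.exp (-u) : ℝ) : ℂ) := by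
    unfold aa; push_cast; ring
  have hle : Real.exp (-u) ≤ Real.exp (-x) := Real.exp_le_exp.2 (by linarith)
  have h1 : ‖SS ⌊Real.exp u⌋₊ - SS ⌊Real.exp x⌋₊‖ ≤ Real.exp u - Real.exp x + 1 := by
    refine (SS_sub (Nat.floor_mono (Real.exp_le_exp.2 h))).trans ?_
    have := Nat.floor_le (Real.exp_pos u).le
    have := Nat.lt_floor_add_one (Real.exp x)
    linarith
  have h2 := SS_exp_le x
  have hxu : Real.exp x * Real.exp (-u) = Real.exp (x - u) := by rw [← Real.exp_add]; ring_nf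
  have huu : Real.exp u * Real.exp (-u) = 1 := by rw [← Real.exp_add]; simp
  have hxx : Real.exp x * Real.exp (-x) = 1 := by rw [← Real.exp_add]; simp
  have h3 := Real.add_one_le_exp (x - u)
  rw [e]
  refine (norm_sub_le _ _).trans ?_
  rw [norm_mul, norm_mul, Complex.norm_real, Complex.norm_real, Real.norm_of_nonneg (Real.exp_pos _).le,
    Real.norm_of_nonneg (by linarith)]
  have m1 := mul_le_mul_of_nonneg_right h1 (Real.exp_pos (-u)).le
  have m2 := mul_le_mul_of_nonneg_right h2 (sub_nonneg.2 hle)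
  nlinarith

lemma aa_osc (x u : ℝ) : ‖aa x - aa u‖ ≤ 2 * |u - x| + Real.exp (-x) := by
  rcases le_total x u with h | h
  · rw [norm_sub_rev, abs_of_nonneg (by linarith)]
    have : Real.exp (-u) ≤ Real.exp (-x) := Real.exp_le_exp.2 (by linarith)
    have := aa_osc' h
    linarith
  · rw [abs_of_nonpos (by linarith)]
    have := aa_osc' h
    linarith

lemma GG_eq (s : ℂ) (hs : 0 < s.re) :
    GG s = ∫ u in Set.Ioi (0:ℝ), aa u * cexp (-s * u) := by
  have hs1 : 1 < (s + 1).re := by simpa using hs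
  have h1 : s + 1 ≠ 0 := ne_zero_of_one_lt_re hs1
  have hO : (fun n : ℕ ↦ ∑ k ∈ Finset.Icc 1 n, lio k) =O[atTop] fun n ↦ (n : ℝ) ^ (1:ℝ) := by
    refine Asymptotics.isBigO_of_le _ fun n => ?_
    have := SS_le n
    simpa [SS] using this
  have hL := LSeries_eq_mul_integral lio zero_le_one hs1 (lio_LSeriesSummable hs1) hO
  have hz := LSeries_lio_mul hs1
  have hs0 : s ≠ 0 := by rintro rfl; simp at hs
  have hzeta : riemannZeta (s + 1) = s⁻¹ * riemannZeta₁ (s + 1) := by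
    have hne : s + 1 ≠ 1 := by simpa using hs0
    grind [riemannZeta₁, riemannZeta₀]
  have hz1 : riemannZeta₁ (s + 1) ≠ 0 := zeta1_ne_zero hs1.le
  have hsub := integral_comp_exp_Ioi (fun t : ℝ => (∑ k ∈ Finset.Icc 1 ⌊t⌋₊, lio k) * (t:ℂ) ^ (-((s + 1) + 1))) 0
  rw [Real.exp_zero] at hsub
  rw [← hsub] at hL
  have : GG s = LSeries lio (s + 1) / (s + 1) := by
    unfold GG
    rw [← hz, hzeta]
    field_simp
  rw [this, hL, mul_div_cancel_left₀ _ h1]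
  refine integral_congr_ae (ae_of_all _ fun u => ?_)
  simp only [aa, SS, real_smul]
  rw [cpow_def_of_ne_zero (by simp), ← Complex.ofReal_log (Real.exp_pos u).le, Real.log_exp]
  have : ((Real.exp u : ℝ) : ℂ) * cexp (u * -(s + 1 + 1)) = (Real.exp (-u) : ℝ) * cexp (-s * u) := by
    push_cast
    rw [← Complex.exp_add, ← Complex.exp_add]
    congr 1
    ring
  linear_combination (∑ k ∈ Finset.Icc 1 ⌊Real.exp u⌋₊, lio k) * this

end Arith


open Finset Filter

/-- The average of the Liouville function `λ(n) = (−1)^{Ω(n)}` tends to zero: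
`(1/N)∑_{n=1}^{N} λ(n) → 0` (an equivalent form of the prime number theorem). -/
theorem liouville_average_tendsto_zero :
    Tendsto (fun N : ℕ =>
        (∑ n ∈ Finset.Icc 1 N, ((-1 : ℝ) ^ (ArithmeticFunction.cardFactors n))) / (N : ℝ))
      atTop (nhds 0) := by
  have h := taub aa aa_meas aa_le aa_neg GG GG_cont GG_eq aa_osc
  have h2 := h.comp (Real.tendsto_log_atTop.comp tendsto_natCast_atTop_atTop)
  have h3 := h2.norm
  rw [norm_zero] at h3
  rw [tendsto_zero_iff_norm_tendsto_zero]
  refine h3.congr' ?_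
  filter_upwards [eventually_gt_atTop 0] with N hN
  have hN' : (0 : ℝ) < N := by exact_mod_cast hN
  have hS : SS N = ((∑ n ∈ Finset.Icc 1 N, ((-1 : ℝ) ^ (ArithmeticFunction.cardFactors n)) : ℝ) : ℂ) := by
    unfold SS
    push_cast
    refine Finset.sum_congr rfl fun n hn => ?_
    have : n ≠ 0 := by have := (Finset.mem_Icc.1 hn).1; omega
    simp [lio, ArithmeticFunction.liouville_apply this]
  simp only [Function.comp, aa]
  rw [Real.exp_neg, Real.exp_log hN', Nat.floor_natCast, hS, ← Complex.ofReal_mul,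
    Complex.norm_real, div_eq_mul_inv]
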